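/- arXiv:1812.10160 — 6 statements merged into one kernel-verified Lean document; each statement's English description precedes it below -/
import Mathlib

section
/- Let n₁, n₂, n₃ be nonnegative integers with n₃ ≥ 2, let g ∈ ℝ, and let S = {(w, x, y) ∈ ℝ^{n₁} × ℝ^{n₂} × ℝ^{n₃} : Σ_{i=1}^{n₁} wᵢ² − Σ_{j=1}^{n₂} xⱼ² + Σ_{k=1}^{n₃} yₖ = g and (w,x,y) ∈ P} for some set P. If (a, b, c) ∈ S and (a, b, c) lies in the topological interior of P, then (a, b, c) is not an extreme point of S. -/
/-- Let `S = {(w,x,y) : Σ wᵢ² − Σ xⱼ² + Σ yₖ = g, (w,x,y) ∈ P}` with `n₃ ≥ 2` linear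
variables.  Any point of `S` lying in the topological interior of `P` is not an
extreme point of `S`. -/
theorem not_extremePoint_of_mem_interior_quadric_two_linear
    (n₁ n₂ n₃ : ℕ) (hn₃ : 2 ≤ n₃) (g : ℝ)
    (P : Set ((Fin n₁ → ℝ) × (Fin n₂ → ℝ) × (Fin n₃ → ℝ)))
    (S : Set ((Fin n₁ → ℝ) × (Fin n₂ → ℝ) × (Fin n₃ → ℝ)))
    (hS : S = {p | (∑ i, (p.1 i) ^ 2) - (∑ j, (p.2.1 j) ^ 2) + (∑ k, p.2.2 k) = g ∧ p ∈ P})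
    (p : (Fin n₁ → ℝ) × (Fin n₂ → ℝ) × (Fin n₃ → ℝ))
    (hpS : p ∈ S) (hpP : p ∈ interior P) :
    p ∉ S.extremePoints ℝ := by
  intro hext
  obtain ⟨i, j, hij⟩ : ∃ i j : Fin n₃, i ≠ j :=
    ⟨⟨0, by omega⟩, ⟨1, by omega⟩, by simp [Fin.ext_iff]⟩
  set v : Fin n₃ → ℝ := Pi.single i 1 - Pi.single j 1 with hv
  have hvs : ∑ k, v k = 0 := by simp [hv, Finset.sum_sub_distrib]
  have hvi : v i = 1 := by simp [hv, hij]
  let d : (Fin n₁ → ℝ) × (Fin n₂ → ℝ) × (Fin n₃ → ℝ) := (0, 0, v)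
  have hc : Continuous fun t : ℝ => p + t • d := by fun_prop
  have hev : ∀ᶠ t in nhds (0 : ℝ), p + t • d ∈ P := by
    apply hc.continuousAt.eventually
    simpa using mem_interior_iff_mem_nhds.1 hpP
  obtain ⟨ε, hε, hb⟩ := Metric.eventually_nhds_iff.1 hev
  have hmem : ∀ t : ℝ, |t| < ε → p + t • d ∈ S := by
    intro t ht
    have h1 : p + t • d ∈ P := hb (by simpa using ht)
    rw [hS] at hpS ⊢
    refine ⟨?_, h1⟩
    have h2 := hpS.1
    simp only [d, Prod.fst_add, Prod.snd_add, Prod.smul_fst, Prod.smul_snd, Pi.add_apply,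
      Pi.smul_apply, smul_eq_mul, Pi.zero_apply, mul_zero, add_zero, Finset.sum_add_distrib,
      ← Finset.mul_sum, hvs]
    exact h2
  have hA := hmem (ε / 2) (by rw [abs_of_pos (by linarith)]; linarith)
  have hB := hmem (-(ε / 2)) (by rw [abs_neg, abs_of_pos (by linarith)]; linarith)
  have h := hext.2 hA hB ⟨1 / 2, 1 / 2, by norm_num, by norm_num, by norm_num, by module⟩
  have h3 := congrArg (fun q => q.2.2 i) h
  simp [d, hvi] at h3
  linarith
end

section
/- Let n₁, n₂ be positive integers, let g ∈ ℝ, and let S = {(w, x, y) ∈ ℝ^{n₁} × ℝ^{n₂} × ℝ : Σ_{i=1}^{n₁} wᵢ² − Σ_{j=1}^{n₂} xⱼ² + y = g and (w,x,y) ∈ P} for some set P. If (a, b, c) ∈ S and (a, b, c) lies in the topological interior of P, then (a, b, c) is not an extreme point of S. -/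
theorem sum_sq_shift_single {n : ℕ} (a : Fin n → ℝ) (k : Fin n) (t : ℝ) :
    ∑ i, (a i + t * (Pi.single k (1:ℝ) : Fin n → ℝ) i) ^ 2 = ∑ i, (a i) ^ 2 + (2 * t * a k + t ^ 2) := by
  have h : ∀ i, (a i + t * (Pi.single k (1:ℝ) : Fin n → ℝ) i) ^ 2
      = (a i) ^ 2 + (if i = k then 2 * t * a k + t ^ 2 else 0) := by
    intro i
    by_cases hi : i = k
    · subst hi
      simp
      ring
    · simp [hi]
  simp only [h, Finset.sum_add_distrib]
  simp

/-- Let `S = {(w,x,y) ∈ ℝ^{n₁} × ℝ^{n₂} × ℝ : Σ wᵢ² − Σ xⱼ² + y = g, (w,x,y) ∈ P}` with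
`n₁, n₂ ≥ 1` and exactly one linear variable.  Any point of `S` lying in the topological
interior of `P` is not an extreme point of `S`. -/
theorem not_extremePoint_of_mem_interior_quadric_one_linear
    (n₁ n₂ : ℕ) (hn₁ : 1 ≤ n₁) (hn₂ : 1 ≤ n₂) (g : ℝ)
    (P : Set ((Fin n₁ → ℝ) × (Fin n₂ → ℝ) × ℝ))
    (S : Set ((Fin n₁ → ℝ) × (Fin n₂ → ℝ) × ℝ))
    (hS : S = {p | (∑ i, (p.1 i) ^ 2) - (∑ j, (p.2.1 j) ^ 2) + p.2.2 = g ∧ p ∈ P})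
    (p : (Fin n₁ → ℝ) × (Fin n₂ → ℝ) × ℝ)
    (hpS : p ∈ S) (hpP : p ∈ interior P) :
    p ∉ S.extremePoints ℝ := by
  rintro ⟨-, hext⟩
  subst hS
  let i : Fin n₁ := ⟨0, hn₁⟩
  let j : Fin n₂ := ⟨0, hn₂⟩
  let d : (Fin n₁ → ℝ) × (Fin n₂ → ℝ) × ℝ :=
    (Pi.single i 1, Pi.single j 1, 2 * p.2.1 j - 2 * p.1 i)
  have hc : Continuous (fun t : ℝ => p + t • d) := by fun_prop
  have hnhds : (fun t : ℝ => p + t • d) ⁻¹' interior P ∈ nhds (0:ℝ) := by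
    apply hc.continuousAt.preimage_mem_nhds
    apply isOpen_interior.mem_nhds
    simpa using hpP
  obtain ⟨ε, hε, hball⟩ := Metric.mem_nhds_iff.1 hnhds
  have key : ∀ t : ℝ, |t| < ε → p + t • d ∈
      {p : (Fin n₁ → ℝ) × (Fin n₂ → ℝ) × ℝ |
        (∑ i, (p.1 i) ^ 2) - (∑ j, (p.2.1 j) ^ 2) + p.2.2 = g ∧ p ∈ P} := by
    intro t ht
    refine ⟨?_, interior_subset (hball (by simpa using ht))⟩
    have h1 := sum_sq_shift_single p.1 i t
    have h2 := sum_sq_shift_single p.2.1 j t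
    have h0 := hpS.1
    simp only [d, Prod.fst_add, Prod.snd_add, Prod.smul_fst, Prod.smul_snd, Pi.add_apply,
      Pi.smul_apply, smul_eq_mul]
    rw [h1, h2]
    linarith
  have hu := key (ε / 2) (by rw [abs_of_pos (by linarith)]; linarith)
  have hv := key (-(ε / 2)) (by rw [abs_neg, abs_of_pos (by linarith)]; linarith)
  have hseg : p ∈ openSegment ℝ (p + (ε / 2) • d) (p + (-(ε / 2)) • d) := by
    refine ⟨1 / 2, 1 / 2, by norm_num, by norm_num, by norm_num, ?_⟩
    module
  have h := hext hu hv hseg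
  have h3 := congrFun (congrArg Prod.fst h) i
  simp [d] at h3
  linarith
end

section
/- Let n₁ ≥ 2 and n₂ ≥ 1 be integers, let g ≥ 0, and let S = {(w, x) ∈ ℝ^{n₁} × ℝ^{n₂} : Σ_{i=1}^{n₁} wᵢ² − Σ_{j=1}^{n₂} xⱼ² = g and (w,x) ∈ P} for some set P. If (a, b) ∈ S and (a, b) lies in the topological interior of P, then (a, b) is not an extreme point of S. -/
open Finset in
lemma exists_orth (n : ℕ) (hn : 2 ≤ n) (a : Fin n → ℝ) :
    ∃ c : Fin n → ℝ, 0 < ∑ i, c i ^ 2 ∧ ∑ i, a i * c i = 0 := by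
  obtain ⟨m, rfl⟩ : ∃ m, n = m + 2 := ⟨n - 2, by omega⟩
  by_cases h : a 0 = 0
  · refine ⟨Fin.cons 1 0, ?_, ?_⟩
    · simp [Fin.sum_univ_succ]
    · simp [Fin.sum_univ_succ, h]
  · refine ⟨Fin.cons (- a 1) (Fin.cons (a 0) 0), ?_, ?_⟩
    · simp [Fin.sum_univ_succ]
      positivity
    · simp [Fin.sum_univ_succ]
      ring

lemma exists_dir (n₁ n₂ : ℕ) (hn₁ : 2 ≤ n₁) (hn₂ : 1 ≤ n₂) (a : Fin n₁ → ℝ) (b : Fin n₂ → ℝ)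
    (h : ∑ j, b j ^ 2 ≤ ∑ i, a i ^ 2) :
    ∃ (u : Fin n₁ → ℝ) (v : Fin n₂ → ℝ), v ≠ 0 ∧ ∑ i, u i ^ 2 = ∑ j, v j ^ 2 ∧
      ∑ i, a i * u i = ∑ j, b j * v j := by
  obtain ⟨c, hc, hac⟩ := exists_orth n₁ hn₁ a
  by_cases hb : b = 0
  · refine ⟨c, Pi.single ⟨0, hn₂⟩ (√(∑ i, c i ^ 2)), ?_, ?_, ?_⟩
    · intro h0
      have := congrFun h0 ⟨0, hn₂⟩
      simp at this
      exact (Real.sqrt_pos.2 hc).ne' this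
    · rw [Finset.sum_eq_single (⟨0, hn₂⟩ : Fin n₂)]
      · rw [Pi.single_eq_same, Real.sq_sqrt hc.le]
      · intro j _ hj
        rw [Pi.single_eq_of_ne hj]; simp
      · simp
    · simp [hb, hac]
  · have hB : 0 < ∑ j, b j ^ 2 := by
      obtain ⟨j, hj⟩ := Function.ne_iff.1 hb
      refine Finset.sum_pos' (fun i _ => sq_nonneg _) ⟨j, Finset.mem_univ _, ?_⟩
      have : b j ≠ 0 := hj
      positivity
    set B := ∑ j, b j ^ 2 with hBd
    set A := ∑ i, a i ^ 2 with hAd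
    set C := ∑ i, c i ^ 2 with hCd
    have hA : 0 < A := lt_of_lt_of_le hB h
    have hnn : 0 ≤ B * (A - B) / (A * C) :=
      div_nonneg (mul_nonneg hB.le (sub_nonneg.2 h)) (mul_pos hA hc).le
    obtain ⟨β, hβ⟩ : ∃ β : ℝ, β ^ 2 = B * (A - B) / (A * C) := ⟨_, Real.sq_sqrt hnn⟩
    refine ⟨fun i => B / A * a i + β * c i, b, hb, ?_, ?_⟩
    · have : ∑ i, (B / A * a i + β * c i) ^ 2
          = (B / A) ^ 2 * A + 2 * (B / A) * β * (∑ i, a i * c i) + β ^ 2 * C := by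
        rw [hAd, hCd, Finset.mul_sum, Finset.mul_sum, Finset.mul_sum, ← Finset.sum_add_distrib,
          ← Finset.sum_add_distrib]
        exact Finset.sum_congr rfl fun i _ => by ring
      rw [this, hac, hβ]
      field_simp
      ring
    · have : ∑ i, a i * (B / A * a i + β * c i) = (B / A) * A + β * (∑ i, a i * c i) := by
        nth_rewrite 3 [hAd]
        rw [Finset.mul_sum, Finset.mul_sum, ← Finset.sum_add_distrib]
        exact Finset.sum_congr rfl fun i _ => by ring
      rw [this, hac, mul_zero, add_zero, div_mul_cancel₀ _ hA.ne', hBd]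
      exact Finset.sum_congr rfl fun i _ => by ring

lemma sum_line (n : ℕ) (a u : Fin n → ℝ) (t : ℝ) :
    ∑ i, (a i + t * u i) ^ 2
      = ∑ i, a i ^ 2 + 2 * t * ∑ i, a i * u i + t ^ 2 * ∑ i, u i ^ 2 := by
  rw [Finset.mul_sum, Finset.mul_sum, ← Finset.sum_add_distrib, ← Finset.sum_add_distrib]
  exact Finset.sum_congr rfl fun i _ => by ring

/-- Let `S = {(w,x) ∈ ℝ^{n₁} × ℝ^{n₂} : Σ wᵢ² − Σ xⱼ² = g, (w,x) ∈ P}` with `n₁ ≥ 2`,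
`n₂ ≥ 1` and `g ≥ 0`.  Any point of `S` lying in the topological interior of `P` is not
an extreme point of `S`. -/
theorem not_extremePoint_of_mem_interior_quadric_no_linear
    (n₁ n₂ : ℕ) (hn₁ : 2 ≤ n₁) (hn₂ : 1 ≤ n₂) (g : ℝ) (hg : 0 ≤ g)
    (P : Set ((Fin n₁ → ℝ) × (Fin n₂ → ℝ)))
    (S : Set ((Fin n₁ → ℝ) × (Fin n₂ → ℝ)))
    (hS : S = {p | (∑ i, (p.1 i) ^ 2) - (∑ j, (p.2 j) ^ 2) = g ∧ p ∈ P})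
    (p : (Fin n₁ → ℝ) × (Fin n₂ → ℝ))
    (hpS : p ∈ S) (hpP : p ∈ interior P) :
    p ∉ S.extremePoints ℝ := by
  subst hS
  obtain ⟨a, b⟩ := p
  obtain ⟨hq, -⟩ := hpS
  simp only at hq
  obtain ⟨u, v, hv, huv, hab⟩ := exists_dir n₁ n₂ hn₁ hn₂ a b (by linarith)
  have hcont : Continuous fun t : ℝ => ((a, b) + t • (u, v) : (Fin n₁ → ℝ) × (Fin n₂ → ℝ)) := by
    fun_prop
  have hmem : (fun t : ℝ => ((a, b) + t • (u, v) : (Fin n₁ → ℝ) × (Fin n₂ → ℝ))) ⁻¹' interior P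
      ∈ nhds (0 : ℝ) :=
    (isOpen_interior.preimage hcont).mem_nhds (by simpa using hpP)
  obtain ⟨ε, hε, hball⟩ := Metric.mem_nhds_iff.1 hmem
  have key : ∀ t : ℝ, |t| < ε → ((a, b) + t • (u, v) : (Fin n₁ → ℝ) × (Fin n₂ → ℝ)) ∈
      {p : (Fin n₁ → ℝ) × (Fin n₂ → ℝ) |
        (∑ i, (p.1 i) ^ 2) - (∑ j, (p.2 j) ^ 2) = g ∧ p ∈ P} := by
    intro t ht
    refine ⟨?_, interior_subset (hball (by simpa using ht))⟩
    simp only [Prod.smul_mk, Prod.mk_add_mk, Pi.add_apply, Pi.smul_apply, smul_eq_mul]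
    rw [sum_line, sum_line, huv, hab]
    linarith
  intro hext
  have h1 := key (ε / 2) (by rw [abs_of_pos (by positivity)]; linarith)
  have h2 := key (-(ε / 2)) (by rw [abs_neg, abs_of_pos (by positivity)]; linarith)
  have h3 := hext.2 h1 h2 ⟨1 / 2, 1 / 2, by norm_num, by norm_num, by norm_num, by module⟩
  have h4 : (ε / 2) • (u, v) = 0 := by simpa using h3
  have h5 := (smul_eq_zero.1 h4).resolve_left (by positivity)
  exact hv (congrArg Prod.snd h5)
end

section
/- Let n₁ ≥ 2 and n₂ ≥ 1 be integers and g ≥ 0. Suppose (a, b) ∈ ℝ^{n₁} × ℝ^{n₂} satisfies Σ_{i=1}^{n₁} aᵢ² − Σ_{j=1}^{n₂} bⱼ² = g and (a, b) ≠ 0. Then there exists (u, v) ∈ ℝ^{n₁} × ℝ^{n₂} with (u, v) ≠ 0 such that for every λ ∈ ℝ, Σ_{i=1}^{n₁} (aᵢ + λuᵢ)² − Σ_{j=1}^{n₂} (bⱼ + λvⱼ)² = g. That is, the straight line through (a,b) in direction (u,v) is entirely contained in the surface {(w,x) : Σ wᵢ² − Σ xⱼ² = g}. -/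
/-- The quadric `{(w,x) : Σ wᵢ² − Σ xⱼ² = g}` with `g ≥ 0`, `n₁ ≥ 2`, `n₂ ≥ 1` is ruled
through every nonzero point: if `(a,b)` lies on the quadric and `(a,b) ≠ 0`, then there is
a nonzero direction `(u,v)` such that the whole line `(a,b) + λ(u,v)` lies on the quadric. -/
theorem quadric_ruled_through_nonzero_point
    (n₁ n₂ : ℕ) (hn₁ : 2 ≤ n₁) (hn₂ : 1 ≤ n₂) (g : ℝ) (hg : 0 ≤ g)
    (a : Fin n₁ → ℝ) (b : Fin n₂ → ℝ)
    (hab : (∑ i, (a i) ^ 2) - (∑ j, (b j) ^ 2) = g)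
    (hne : (a, b) ≠ 0) :
    ∃ (u : Fin n₁ → ℝ) (v : Fin n₂ → ℝ), (u, v) ≠ 0 ∧
      ∀ l : ℝ, (∑ i, (a i + l * u i) ^ 2) - (∑ j, (b j + l * v j) ^ 2) = g := by
  have hA0 : 0 ≤ ∑ j, (b j) ^ 2 := Finset.sum_nonneg fun j _ => sq_nonneg _
  have hex : ∃ k, a k ≠ 0 := by
    by_contra hcon
    push Not at hcon
    have h1 : ∑ i, (a i) ^ 2 = 0 := Finset.sum_eq_zero fun i _ => by rw [hcon i]; ring
    have h2 : ∑ j, (b j) ^ 2 = 0 := by linarith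
    rw [Finset.sum_eq_zero_iff_of_nonneg (fun j _ => sq_nonneg _)] at h2
    apply hne
    refine Prod.ext (funext hcon) (funext fun j => ?_)
    exact pow_eq_zero_iff (two_ne_zero) |>.1 (h2 j (Finset.mem_univ j))
  obtain ⟨k, hk⟩ := hex
  haveI : Nontrivial (Fin n₁) := Fin.nontrivial_iff_two_le.2 hn₁
  obtain ⟨m, hm⟩ := exists_ne k
  let z : Fin n₂ := ⟨0, hn₂⟩
  obtain ⟨p, hp⟩ : ∃ p : Fin n₁ → ℝ, p = fun i => (if i = k then a m else 0) - (if i = m then a k else 0) :=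
    ⟨_, rfl⟩
  have hpf : ∀ f : Fin n₁ → ℝ, ∑ i, p i * f i = a m * f k - a k * f m := by
    intro f
    simp [hp, sub_mul, Finset.sum_sub_distrib]
  have hpa : ∑ i, p i * a i = 0 := by rw [hpf]; ring
  have hpp : ∑ i, p i * p i = a m ^ 2 + a k ^ 2 := by
    rw [hpf]; simp [hp, hm, hm.symm]; ring
  have hkpos : 0 < a k ^ 2 := by positivity
  have hP : 0 < a m ^ 2 + a k ^ 2 := by positivity
  have hApos : 0 < ∑ i, (a i) ^ 2 :=
    lt_of_lt_of_le hkpos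
      (Finset.single_le_sum (f := fun i => (a i) ^ 2) (fun i _ => sq_nonneg _) (Finset.mem_univ k))
  have hbz : b z ^ 2 ≤ ∑ j, (b j) ^ 2 :=
    Finset.single_le_sum (f := fun j => (b j) ^ 2) (fun i _ => sq_nonneg _) (Finset.mem_univ z)
  obtain ⟨A, hA⟩ : ∃ A, A = ∑ i, (a i) ^ 2 := ⟨_, rfl⟩
  obtain ⟨P, hPe⟩ : ∃ P, P = a m ^ 2 + a k ^ 2 := ⟨_, rfl⟩
  rw [← hA] at hApos hab
  rw [← hPe] at hP hpp
  have hle : b z ^ 2 / A ≤ 1 := by rw [div_le_one hApos]; linarith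
  obtain ⟨c, hc⟩ : ∃ c : ℝ, c ^ 2 = (1 - b z ^ 2 / A) / P :=
    ⟨_, Real.sq_sqrt (div_nonneg (by linarith) hP.le)⟩
  refine ⟨fun i => b z / A * a i + c * p i, Pi.single z 1, ?_, ?_⟩
  · intro h
    have h2 := congrFun (congrArg Prod.snd h) z
    simp at h2
  · intro l
    have e1 : ∑ i, (a i + l * (b z / A * a i + c * p i)) ^ 2
        = (1 + l * (b z / A)) ^ 2 * A + 2 * (1 + l * (b z / A)) * (l * c) * ∑ i, p i * a i
          + l ^ 2 * c ^ 2 * ∑ i, p i * p i := by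
      rw [hA, Finset.mul_sum, Finset.mul_sum, Finset.mul_sum, ← Finset.sum_add_distrib,
        ← Finset.sum_add_distrib]
      exact Finset.sum_congr rfl fun i _ => by ring
    have e2 : ∑ j, (b j + l * (Pi.single z 1 : Fin n₂ → ℝ) j) ^ 2
        = ∑ j, (b j) ^ 2 + 2 * l * b z + l ^ 2 := by
      have : ∀ j, (b j + l * (Pi.single z 1 : Fin n₂ → ℝ) j) ^ 2
          = (b j) ^ 2 + if j = z then 2 * l * b z + l ^ 2 else 0 := by
        intro j
        by_cases h : j = z
        · subst h; simp; ring
        · simp [h]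
      simp only [this, Finset.sum_add_distrib]
      simp; ring
    rw [e1, e2, hpa, hpp, hc]
    have : (1 + l * (b z / A)) ^ 2 * A + 2 * (1 + l * (b z / A)) * (l * c) * 0
          + l ^ 2 * ((1 - b z ^ 2 / A) / P) * P = A + 2 * l * b z + l ^ 2 := by
      have := hApos.ne'
      have := hP.ne'
      field_simp
      ring
    linarith
end

section
/- Let G ⊆ ℝⁿ be a convex set and f : ℝⁿ → ℝ a continuous function. Then conv(G ∩ {x : f(x) = 0}) = conv(G ∩ {x : f(x) ≤ 0}) ∩ conv(G ∩ {x : f(x) ≥ 0}). -/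
theorem aux_mem_hull
    (n : ℕ) (G : Set (Fin n → ℝ)) (hG : Convex ℝ G)
    (f : (Fin n → ℝ) → ℝ) (hf : Continuous f) (x : Fin n → ℝ) (hx : 0 ≤ f x)
    (h : x ∈ convexHull ℝ (G ∩ {x | f x ≤ 0})) :
    x ∈ convexHull ℝ (G ∩ {x | f x = 0}) := by
  have hxG : x ∈ G := convexHull_min Set.inter_subset_left hG h
  rcases hx.eq_or_lt with h0 | hpos
  · exact subset_convexHull ℝ _ ⟨hxG, h0.symm⟩
  set C := convexHull ℝ (G ∩ {x | f x = 0}) with hC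
  have hCc : Convex ℝ C := convex_convexHull ℝ _
  let S : Set (Fin n → ℝ) := {y | ∃ u : ℝ, 0 < u ∧ ∃ p ∈ C, y = x + u • (p - x)}
  have hS : Convex ℝ S := by
    rintro y ⟨u, hu, p, hp, rfl⟩ z ⟨v, hv, q, hq, rfl⟩ a b ha hb hab
    have hw : 0 < a * u + b * v := by
      rcases ha.eq_or_lt with rfl | ha'
      · have : b = 1 := by linarith
        subst this; simpa using hv
      · have := mul_pos ha' hu
        have := mul_nonneg hb hv.le
        linarith
    refine ⟨a * u + b * v, hw, (a * u / (a * u + b * v)) • p + (b * v / (a * u + b * v)) • q,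
      hCc hp hq (by positivity) (by positivity) (by field_simp), ?_⟩
    have hb' : b = 1 - a := by linarith
    ext i
    simp only [Pi.add_apply, Pi.smul_apply, Pi.sub_apply, smul_eq_mul]
    have e : (a * u + b * v) * (a * u / (a * u + b * v) * p i + b * v / (a * u + b * v) * q i - x i)
        = a * u * p i + b * v * q i - (a * u + b * v) * x i := by
      field_simp
    rw [e, hb']
    ring
  have hsub : G ∩ {x | f x ≤ 0} ⊆ S := by
    rintro y ⟨hyG, hy⟩
    have hcont : ContinuousOn (fun t : ℝ => f (x + t • (y - x))) (Set.Icc 0 1) := by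
      apply Continuous.continuousOn; fun_prop
    have := intermediate_value_Icc' (zero_le_one' ℝ) hcont
    obtain ⟨t, ht, hft⟩ := this (show (0:ℝ) ∈ _ from ⟨by simpa using hy, by simpa using hpos.le⟩)
    have ht0 : 0 < t := by
      rcases ht.1.eq_or_lt with rfl | h'
      · simp at hft; linarith
      · exact h'
    refine ⟨t⁻¹, inv_pos.2 ht0, x + t • (y - x), subset_convexHull ℝ _ ⟨?_, hft⟩, ?_⟩
    · exact hG.add_smul_sub_mem hxG hyG ht
    · rw [add_sub_cancel_left, smul_smul, inv_mul_cancel₀ ht0.ne', one_smul, add_sub_cancel]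
  obtain ⟨u, hu, p, hp, he⟩ := convexHull_min hsub hS h
  have h1 : u • (p - x) = 0 := by simpa using he
  have h2 : p - x = 0 := (smul_eq_zero.1 h1).resolve_left hu.ne'
  rwa [← sub_eq_zero.1 h2]

/-- For a convex set `G ⊆ ℝⁿ` and a continuous function `f : ℝⁿ → ℝ`,
`conv(G ∩ {f = 0}) = conv(G ∩ {f ≤ 0}) ∩ conv(G ∩ {f ≥ 0})`. -/
theorem convexHull_inter_zero_set_eq
    (n : ℕ) (G : Set (Fin n → ℝ)) (hG : Convex ℝ G)
    (f : (Fin n → ℝ) → ℝ) (hf : Continuous f) :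
    convexHull ℝ (G ∩ {x | f x = 0}) =
      convexHull ℝ (G ∩ {x | f x ≤ 0}) ∩ convexHull ℝ (G ∩ {x | 0 ≤ f x}) := by
  apply Set.Subset.antisymm
  · apply Set.subset_inter
    · exact convexHull_mono fun x hx => ⟨hx.1, le_of_eq hx.2⟩
    · exact convexHull_mono fun x hx => ⟨hx.1, ge_of_eq hx.2⟩
  · rintro x ⟨h1, h2⟩
    rcases le_total 0 (f x) with h | h
    · exact aux_mem_hull n G hG f hf x h h1
    · have := aux_mem_hull n G hG (fun x => - f x) hf.neg x (by simpa using h) (by simpa using h2)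
      simpa using this
end

section
/- Let P ⊆ ℝⁿ be a polytope (the convex hull of a finite set of points) and let f : ℝⁿ → ℝ be a convex function. Then conv({x ∈ P : f(x) ≥ 0}) is a polytope, i.e., there exists a finite set W ⊆ ℝⁿ with conv({x ∈ P : f(x) ≥ 0}) = conv(W). -/
lemma aux_sum {E ι : Type*} [AddCommGroup E] [Module ℝ E] (s : Finset ι) (z : ι → E) (l d : ι → ℝ)
    (C : Set E) (hC : Convex ℝ C)
    (hl : ∀ i ∈ s, 0 ≤ l i) (hl1 : ∑ i ∈ s, l i = 1) (hd : ∑ i ∈ s, l i * d i = 0)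
    (hT : ∀ i ∈ s, ∀ j ∈ s, ∀ a b : ℝ, 0 ≤ a → 0 ≤ b → a + b = 1 → 0 ≤ a * d i + b * d j →
      a • z i + b • z j ∈ C) :
    ∑ i ∈ s, l i • z i ∈ C := by
  classical
  set A := s.filter (fun i => 0 ≤ d i) with hA
  set B := s.filter (fun i => ¬ 0 ≤ d i) with hB
  have hAs : ∀ i ∈ A, i ∈ s ∧ 0 ≤ d i := fun i hi => by simpa [hA] using hi
  have hBs : ∀ i ∈ B, i ∈ s ∧ d i < 0 := fun i hi => by simpa [hB] using hi
  set M := ∑ i ∈ A, l i * d i with hM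
  have hMB : ∑ j ∈ B, l j * d j = -M := by
    have := Finset.sum_filter_add_sum_filter_not s (fun i => 0 ≤ d i) (fun i => l i * d i)
    linarith
  have hl1' : ∑ i ∈ A, l i + ∑ i ∈ B, l i = 1 := by
    rw [← hl1]; exact Finset.sum_filter_add_sum_filter_not s _ _
  have hM0 : 0 ≤ M := Finset.sum_nonneg fun i hi => mul_nonneg (hl i (hAs i hi).1) (hAs i hi).2
  rw [← Finset.sum_filter_add_sum_filter_not s (fun i => 0 ≤ d i)]
  change ∑ i ∈ A, l i • z i + ∑ i ∈ B, l i • z i ∈ C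
  rcases hM0.eq_or_lt with h0 | hpos
  · have hz : ∀ j ∈ B, l j = 0 := by
      have h1 : ∑ j ∈ B, l j * (- d j) = 0 := by
        simp only [mul_neg, Finset.sum_neg_distrib]; linarith
      rw [Finset.sum_eq_zero_iff_of_nonneg (fun j hj => mul_nonneg (hl j (hBs j hj).1)
        (by linarith [(hBs j hj).2]))] at h1
      intro j hj
      rcases mul_eq_zero.1 (h1 j hj) with h | h
      · exact h
      · linarith [(hBs j hj).2]
    rw [Finset.sum_eq_zero (s := B) (fun j hj => by rw [hz j hj, zero_smul]), add_zero]
    rw [Finset.sum_eq_zero (s := B) hz, add_zero] at hl1'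
    refine hC.sum_mem (fun i hi => hl i (hAs i hi).1) hl1' fun i hi => ?_
    have := hT i (hAs i hi).1 i (hAs i hi).1 1 0 (by simp) (by simp) (by simp)
      (by simpa using (hAs i hi).2)
    simpa using this
  · have key : ∑ p ∈ A ×ˢ B, (M⁻¹ * (l p.1 * l p.2 * (d p.1 - d p.2))) •
        ((-d p.2 / (d p.1 - d p.2)) • z p.1 + (d p.1 / (d p.1 - d p.2)) • z p.2)
        = ∑ i ∈ A, l i • z i + ∑ i ∈ B, l i • z i := by
      have e : ∀ p ∈ A ×ˢ B, (M⁻¹ * (l p.1 * l p.2 * (d p.1 - d p.2))) •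
        ((-d p.2 / (d p.1 - d p.2)) • z p.1 + (d p.1 / (d p.1 - d p.2)) • z p.2)
        = (M⁻¹ * -(l p.2 * d p.2)) • (l p.1 • z p.1) + (M⁻¹ * (l p.1 * d p.1)) • (l p.2 • z p.2) := by
        intro p hp
        rw [Finset.mem_product] at hp
        have h1 := (hAs _ hp.1).2
        have h2 := (hBs _ hp.2).2
        have h3 : d p.1 - d p.2 ≠ 0 := by linarith
        simp only [smul_add, smul_smul]
        congr 2 <;> field_simp
      rw [Finset.sum_congr rfl e, Finset.sum_add_distrib]
      congr 1
      · rw [Finset.sum_product]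
        refine Finset.sum_congr rfl fun i _ => ?_
        simp only
        rw [← Finset.sum_smul, ← Finset.mul_sum, Finset.sum_neg_distrib, hMB, neg_neg,
          inv_mul_cancel₀ hpos.ne', one_smul]
      · rw [Finset.sum_product_right]
        refine Finset.sum_congr rfl fun i _ => ?_
        simp only
        rw [← Finset.sum_smul, ← Finset.mul_sum, inv_mul_cancel₀ hpos.ne', one_smul]
    rw [← key]
    refine hC.sum_mem ?_ ?_ ?_
    · intro p hp
      rw [Finset.mem_product] at hp
      have h1 := hAs _ hp.1
      have h2 := hBs _ hp.2
      have := hl _ h1.1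
      have := hl _ h2.1
      have : 0 ≤ d p.1 - d p.2 := by linarith
      positivity
    · rw [← Finset.mul_sum]
      have : ∑ p ∈ A ×ˢ B, l p.1 * l p.2 * (d p.1 - d p.2)
          = ∑ p ∈ A ×ˢ B, ((l p.1 * d p.1) * l p.2 + l p.1 * (-(l p.2 * d p.2))) :=
        Finset.sum_congr rfl fun p _ => by ring
      rw [this, Finset.sum_add_distrib, Finset.sum_product' (f := fun i j => l i * d i * l j), Finset.sum_product' (f := fun i j => l i * -(l j * d j)), ← Finset.sum_mul_sum, ← Finset.sum_mul_sum, Finset.sum_neg_distrib, hMB, ← hM]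
      have : M * ∑ j ∈ B, l j + (∑ i ∈ A, l i) * - -M = M := by linear_combination M * hl1'
      rw [this, inv_mul_cancel₀ hpos.ne']
    · intro p hp
      rw [Finset.mem_product] at hp
      have h1 := hAs _ hp.1
      have h2 := hBs _ hp.2
      have h3 : 0 < d p.1 - d p.2 := by linarith
      refine hT _ h1.1 _ h2.1 _ _ (div_nonneg (by linarith) h3.le) (div_nonneg h1.2 h3.le) ?_ ?_
      · field_simp; ring
      · apply le_of_eq; field_simp; ring

lemma aux_seg {E : Type*} [NormedAddCommGroup E] [NormedSpace ℝ E] (S : Set E) (hS : IsClosed S)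
    (v w : E) : ∃ W : Set E, W.Finite ∧ W ⊆ S ∧ S ∩ segment ℝ v w ⊆ convexHull ℝ W := by
  set L : ℝ →ᵃ[ℝ] E := AffineMap.lineMap v w
  have hL : Continuous L := AffineMap.lineMap_continuous
  set K : Set ℝ := Set.Icc 0 1 ∩ L ⁻¹' S
  have hK : IsCompact K := isCompact_Icc.inter_right (hS.preimage hL)
  have hSK : ∀ x ∈ S ∩ segment ℝ v w, ∃ t ∈ K, L t = x := by
    rintro x ⟨hx, hx'⟩
    rw [segment_eq_image_lineMap] at hx'
    obtain ⟨t, ht, rfl⟩ := hx'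
    exact ⟨t, ⟨ht, hx⟩, rfl⟩
  rcases K.eq_empty_or_nonempty with h | h
  · refine ⟨∅, Set.finite_empty, by simp, fun x hx => ?_⟩
    obtain ⟨t, ht, _⟩ := hSK x hx
    simp [h] at ht
  · obtain ⟨a, ha⟩ := hK.exists_isLeast h
    obtain ⟨b, hb⟩ := hK.exists_isGreatest h
    refine ⟨{L a, L b}, by simp, ?_, fun x hx => ?_⟩
    · rintro _ (rfl | rfl)
      · exact ha.1.2
      · exact hb.1.2
    · obtain ⟨t, ht, rfl⟩ := hSK x hx
      rw [convexHull_pair, ← image_segment, segment_eq_Icc (ha.2 hb.1)]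
      exact ⟨t, ⟨ha.2 ht, hb.2 ht⟩, rfl⟩

/-- If `P ⊆ ℝⁿ` is a polytope (the convex hull of a finite set `V`) and `f : ℝⁿ → ℝ` is a
convex function, then `conv({x ∈ P : f(x) ≥ 0})` is again a polytope, i.e. the convex hull
of some finite set `W`. -/
theorem convexHull_polytope_inter_reverse_convex_is_polytope
    (n : ℕ) (V : Set (Fin n → ℝ)) (hV : V.Finite)
    (f : (Fin n → ℝ) → ℝ) (hf : ConvexOn ℝ Set.univ f) :
    ∃ W : Set (Fin n → ℝ), W.Finite ∧
      convexHull ℝ {x ∈ convexHull ℝ V | 0 ≤ f x} = convexHull ℝ W := by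
  have hcont : Continuous f := by
    exact hf.locallyLipschitz.continuous
  set S := {x ∈ convexHull ℝ V | 0 ≤ f x} with hSdef
  have hS : IsClosed S := by
    have h1 : IsClosed (convexHull ℝ V) := hV.isClosed_convexHull ℝ
    exact h1.inter (isClosed_le continuous_const hcont)
  choose Wf hfin hsub hseg using fun v w => aux_seg S hS v w
  refine ⟨⋃ v ∈ V, ⋃ w ∈ V, Wf v w, hV.biUnion fun v _ => hV.biUnion fun w _ => hfin v w, ?_⟩
  apply subset_antisymm
  · refine convexHull_min ?_ (convex_convexHull ℝ _)
    rintro x ⟨hxV, hx⟩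
    obtain ⟨g, hg⟩ := geometric_hahn_banach_open_point (s := {y | f y < 0}) (x := x)
      (by simpa using hf.convex_lt 0) (isOpen_lt hcont continuous_const) (by simpa using hx)
    have hg' : ∀ y, g x ≤ g y → 0 ≤ f y := fun y hy => by
      by_contra h
      exact absurd (hg y (not_le.1 h)) (not_lt.2 hy)
    lift V to Finset (Fin n → ℝ) using hV
    have hxV' := hxV
    rw [Finset.mem_convexHull'] at hxV
    obtain ⟨l, hl0, hl1, hlx⟩ := hxV
    rw [← hlx]
    refine aux_sum V (fun y => y) l (fun y => g y - g x) _ (convex_convexHull ℝ _) hl0 hl1 ?_ ?_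
    · have : g x = ∑ y ∈ V, l y * g y := by
        conv_lhs => rw [← hlx]
        simp
      simp only [mul_sub, Finset.sum_sub_distrib, ← Finset.sum_mul, hl1, ← this]
      ring
    · intro v hv w hw a b ha hb hab hpos
      have hmem : a • v + b • w ∈ segment ℝ v w := ⟨a, b, ha, hb, hab, rfl⟩
      refine convexHull_mono ?_ (hseg v w ⟨⟨?_, hg' _ ?_⟩, hmem⟩)
      · exact fun y hy => Set.mem_biUnion hv (Set.mem_biUnion hw hy)
      · exact (convex_convexHull ℝ _).segment_subset (subset_convexHull ℝ _ hv)
          (subset_convexHull ℝ _ hw) hmem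
      · simp only [map_add, map_smul, smul_eq_mul]
        have : b = 1 - a := by linarith
        subst this
        linarith
  · apply convexHull_mono
    simp only [Set.iUnion_subset_iff]
    exact fun v _ w _ => hsub v w
end
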